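/- arXiv:2301.05811 — 2 statements merged into one kernel-verified Lean document; each statement's English description precedes it below -/
import Mathlib

section
/- Let a, b ∈ ℝⁿ be vectors with nonempty supports A = supp(a) and B = supp(b), and let (h(j))_{j=1}^{n} be independent random variables, each uniformly distributed on [0,1]. Let j_A be the (almost surely unique) minimizer of h over A and j_B the minimizer of h over B, and define the random variable Z = 1[h(j_A) = h(j_B)] · a[j_A] · b[j_B]. Then E[Z] = ⟨a,b⟩ / |A∪B|, where ⟨a,b⟩ = ∑_{k=1}^{n} a[k]·b[k]. -/
open MeasureTheory Finset
open scoped ENNReal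

/-- The product measure on `J → ℝ` in which each coordinate is an independent
uniform random variable on `[0,1]`: a uniform hash family on `J`. -/
noncomputable def uniformHash (J : Type*) [Fintype J] : Measure (J → ℝ) :=
  Measure.pi fun _ : J => (volume : Measure ℝ).restrict (Set.Icc 0 1)

/-- The support `{i : x i ≠ 0}` of a vector, as a `Finset`. -/
noncomputable def supp {n : ℕ} (x : Fin n → ℝ) : Finset (Fin n) :=
  Finset.univ.filter fun i => x i ≠ 0

/-- A minimizer of `f` over the nonempty finite set `s` (the minimizer of a uniform
hash family over a nonempty set is almost surely unique). -/
noncomputable def argminOn {α : Type*} (s : Finset α) (hs : s.Nonempty) (f : α → ℝ) : α :=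
  (s.exists_min_image f hs).choose

/-- The MinHash random variable `Z = 1[h(j_A) = h(j_B)] ⬝ a[j_A] ⬝ b[j_B]`, where
`j_A` and `j_B` are the minimizers of the hash `h` over `A` and `B` respectively. -/
noncomputable def Zuw {n : ℕ} (a b : Fin n → ℝ) (A B : Finset (Fin n))
    (hA : A.Nonempty) (hB : B.Nonempty) (h : Fin n → ℝ) : ℝ :=
  (if h (argminOn A hA h) = h (argminOn B hB h) then (1 : ℝ) else 0) *
    a (argminOn A hA h) * b (argminOn B hB h)


lemma uh_ac (n : ℕ) : uniformHash (Fin n) ≪ (volume : Measure (Fin n → ℝ)) := by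
  unfold uniformHash
  rw [← Measure.restrict_pi_pi]
  exact Measure.restrict_le_self.absolutelyContinuous

instance uh_prob (n : ℕ) : IsProbabilityMeasure (uniformHash (Fin n)) := by
  haveI : IsProbabilityMeasure ((volume : Measure ℝ).restrict (Set.Icc 0 1)) := ⟨by simp⟩
  unfold uniformHash
  infer_instance

lemma uh_inj (n : ℕ) : ∀ᵐ h ∂(uniformHash (Fin n)), Function.Injective h := by
  apply (uh_ac n).ae_le
  have : ∀ i j : Fin n, i ≠ j → ∀ᵐ h ∂(volume : Measure (Fin n → ℝ)), h i ≠ h j := by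
    intro i j hij
    let S : Submodule ℝ (Fin n → ℝ) :=
      LinearMap.ker (LinearMap.proj (R := ℝ) (φ := fun _ : Fin n => ℝ) i - LinearMap.proj j)
    have hS : S ≠ ⊤ := by
      intro hT
      have : (Pi.single i 1 : Fin n → ℝ) ∈ S := hT ▸ Submodule.mem_top
      simp [S, hij, Pi.single_apply, hij.symm] at this
    have h0 := Measure.addHaar_submodule (volume : Measure (Fin n → ℝ)) S hS
    rw [ae_iff]
    convert h0 using 2
    ext h
    simp [S, sub_eq_zero]
  have h2 : ∀ᵐ h ∂(volume : Measure (Fin n → ℝ)), ∀ i j : Fin n, i ≠ j → h i ≠ h j := by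
    rw [ae_all_iff]; intro i
    rw [ae_all_iff]; intro j
    by_cases hij : i = j
    · simp [hij]
    · filter_upwards [this i j hij] with h hh _ using hh
  filter_upwards [h2] with h hh i j hij
  by_contra hne
  exact hh i j hne hij

def minEv {n : ℕ} (U : Finset (Fin n)) (k : Fin n) : Set (Fin n → ℝ) :=
  {h | ∀ j ∈ U, j ≠ k → h k < h j}

lemma minEv_meas {n : ℕ} (U : Finset (Fin n)) (k : Fin n) : MeasurableSet (minEv U k) := by
  have : minEv U k = ⋂ j, ⋂ (_ : j ∈ U), ⋂ (_ : j ≠ k), {h : Fin n → ℝ | h k < h j} := by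
    ext h; simp [minEv]
  rw [this]
  refine MeasurableSet.iInter fun j => MeasurableSet.iInter fun _ => MeasurableSet.iInter fun _ => ?_
  exact measurableSet_lt (measurable_pi_apply k) (measurable_pi_apply j)

lemma minEv_eq {n : ℕ} (U : Finset (Fin n)) (k l : Fin n) (hk : k ∈ U) (hl : l ∈ U) :
    (uniformHash (Fin n)).real (minEv U k) = (uniformHash (Fin n)).real (minEv U l) := by
  have hp := measurePreserving_piCongrLeft (α := fun _ : Fin n => ℝ)
    (fun _ : Fin n => (volume : Measure ℝ).restrict (Set.Icc 0 1)) (Equiv.swap k l)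
  have := hp.measureReal_preimage (minEv_meas U l).nullMeasurableSet
  unfold uniformHash
  rw [← this]
  congr 1
  ext h
  have key : ∀ j, (MeasurableEquiv.piCongrLeft (fun _ : Fin n => ℝ) (Equiv.swap k l)) h j
      = h (Equiv.swap k l j) := by
    intro j
    have := Equiv.piCongrLeft_apply_apply (fun _ : Fin n => ℝ) (Equiv.swap k l) h
      (Equiv.swap k l j)
    rw [Equiv.swap_apply_self] at this
    exact this
  have hs : ∀ j ∈ U, Equiv.swap k l j ∈ U := by
    intro j hj
    rw [Equiv.swap_apply_def]; split_ifs <;> assumption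
  simp only [minEv, Set.mem_preimage, Set.mem_setOf_eq, key, Equiv.swap_apply_right]
  constructor
  · intro H j hj hjl
    refine H _ (hs j hj) fun e => hjl ?_
    rw [Equiv.swap_apply_eq_iff] at e
    simpa using e
  · intro H j hj hjk
    have := H _ (hs j hj) (fun e => hjk (by rw [Equiv.swap_apply_eq_iff] at e; simpa using e))
    simpa using this

lemma sum_ind {n : ℕ} (U : Finset (Fin n)) (h : Fin n → ℝ) (m : Fin n)
    (hm : m ∈ U) (hmin : h ∈ minEv U m) (c : Fin n → ℝ) :
    ∑ k ∈ U, (minEv U k).indicator (fun _ => c k) h = c m := by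
  rw [Finset.sum_eq_single m]
  · simp [hmin]
  · intro k hk hkm
    rw [Set.indicator_of_notMem]
    intro hh
    exact lt_asymm (hh m hm hkm.symm) (hmin k hk hkm)
  · exact fun x => absurd hm x

lemma exists_minEv {n : ℕ} (U : Finset (Fin n)) (hU : U.Nonempty) (h : Fin n → ℝ)
    (hi : Function.Injective h) : ∃ m ∈ U, h ∈ minEv U m := by
  obtain ⟨m, hm, H⟩ := U.exists_min_image h hU
  exact ⟨m, hm, fun j hj hjm => lt_of_le_of_ne (H j hj) fun e => hjm (hi e).symm⟩

lemma int_sum {n : ℕ} (U : Finset (Fin n)) (c : Fin n → ℝ) :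
    ∫ h, ∑ k ∈ U, (minEv U k).indicator (fun _ => c k) h ∂(uniformHash (Fin n))
      = ∑ k ∈ U, (uniformHash (Fin n)).real (minEv U k) * c k := by
  rw [integral_finset_sum]
  · refine Finset.sum_congr rfl fun k _ => ?_
    rw [integral_indicator_const _ (minEv_meas U k), smul_eq_mul]
  · intro k _
    exact (integrable_const _).indicator (minEv_meas U k)

lemma minEv_prob {n : ℕ} (U : Finset (Fin n)) (k : Fin n) (hk : k ∈ U) :
    (uniformHash (Fin n)).real (minEv U k) = 1 / (U.card : ℝ) := by
  have h1 := int_sum U (fun _ => 1)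
  have h2 : ∫ h, ∑ k ∈ U, (minEv U k).indicator (fun _ => (1 : ℝ)) h ∂(uniformHash (Fin n))
      = ∫ _, (1 : ℝ) ∂(uniformHash (Fin n)) := by
    apply integral_congr_ae
    filter_upwards [uh_inj n] with h hi
    obtain ⟨m, hm, H⟩ := exists_minEv U ⟨k, hk⟩ h hi
    exact sum_ind U h m hm H (fun _ => 1)
  rw [h2, Finset.sum_congr rfl (fun l hl => by rw [minEv_eq U l k hl hk])] at h1
  simp at h1
  have : (U.card : ℝ) ≠ 0 := by
    have := Finset.card_pos.2 ⟨k, hk⟩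
    positivity
  field_simp
  linarith

lemma argminOn_eq {n : ℕ} (A : Finset (Fin n)) (hA : A.Nonempty) (h : Fin n → ℝ) :
    argminOn A hA h ∈ A ∧ ∀ j ∈ A, h (argminOn A hA h) ≤ h j :=
  (A.exists_min_image h hA).choose_spec

lemma Zuw_eq {n : ℕ} (a b : Fin n → ℝ)
    (hA : (supp a).Nonempty) (hB : (supp b).Nonempty) (h : Fin n → ℝ)
    (hi : Function.Injective h) (m : Fin n) (hm : m ∈ supp a ∪ supp b)
    (H : h ∈ minEv (supp a ∪ supp b) m) :
    Zuw a b (supp a) (supp b) hA hB h = a m * b m := by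
  obtain ⟨pA, qA⟩ := argminOn_eq _ hA h
  obtain ⟨pB, qB⟩ := argminOn_eq _ hB h
  unfold Zuw
  generalize argminOn (supp a) hA h = x at *
  generalize argminOn (supp b) hB h = y at *
  have eA : m ∈ supp a → x = m := fun hma => by
    by_contra hne
    exact absurd (qA m hma) (not_le.2 (H x (Finset.mem_union_left _ pA) hne))
  have eB : m ∈ supp b → y = m := fun hmb => by
    by_contra hne
    exact absurd (qB m hmb) (not_le.2 (H y (Finset.mem_union_right _ pB) hne))
  by_cases hma : m ∈ supp a
  · obtain rfl := eA hma
    by_cases hmb : x ∈ supp b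
    · obtain rfl := eB hmb
      simp
    · have : b x = 0 := by simpa [supp] using hmb
      have hne : h x ≠ h y := fun e => hmb (hi e ▸ pB)
      simp [this, hne]
  · have ha : a m = 0 := by simpa [supp] using hma
    have hmb : m ∈ supp b := (Finset.mem_union.1 hm).resolve_left hma
    obtain rfl := eB hmb
    have hne : h x ≠ h y := fun e => hma (hi e ▸ pA)
    simp [ha, hne]

/-- For vectors `a, b ∈ ℝⁿ` with nonempty supports `A`, `B` and an independent uniform
hash family `h` on `{1,...,n}`, the random variable
`Z = 1[h(j_A) = h(j_B)] ⬝ a[j_A] ⬝ b[j_B]` satisfies `E[Z] = ⟨a,b⟩ / |A ∪ B|`. -/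
theorem minhash_product_expectation {n : ℕ} (a b : Fin n → ℝ)
    (hA : (supp a).Nonempty) (hB : (supp b).Nonempty) :
    ∫ h, Zuw a b (supp a) (supp b) hA hB h ∂(uniformHash (Fin n))
      = (∑ k, a k * b k) / ((supp a ∪ supp b).card : ℝ) := by
  have h1 : ∫ h, Zuw a b (supp a) (supp b) hA hB h ∂(uniformHash (Fin n))
      = ∫ h, ∑ k ∈ supp a ∪ supp b, (minEv (supp a ∪ supp b) k).indicator
          (fun _ => a k * b k) h ∂(uniformHash (Fin n)) := by
    apply integral_congr_ae
    filter_upwards [uh_inj n] with h hi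
    obtain ⟨m, hm, H⟩ := exists_minEv (supp a ∪ supp b) (hA.mono Finset.subset_union_left) h hi
    rw [Zuw_eq a b hA hB h hi m hm H]
    exact (sum_ind _ h m hm H (fun k => a k * b k)).symm
  rw [h1, int_sum _ (fun k => a k * b k),
    Finset.sum_congr rfl (fun k hk => by rw [minEv_prob _ k hk]), ← Finset.mul_sum,
    Finset.sum_subset (Finset.subset_univ _)]
  · ring
  · intro k _ hk
    have : a k = 0 := by
      by_contra hne
      exact hk (Finset.mem_union_left _ (by simp [supp, hne]))
    simp [this]
end

section
/- There is an absolute constant C > 0 such that the following holds. Let a, b ∈ ℝⁿ have nonempty supports A = supp(a) and B = supp(b) and entries bounded in absolute value by c > 0, let ε ∈ (0,1), and let m ≥ C/ε² be an integer. Let h¹,...,hᵐ be mutually independent uniform hash families on {1,...,n}; for each i let j_A^i and j_B^i be the minimizers of hⁱ over A and over B, and Z_i = 1[hⁱ(j_A^i) = hⁱ(j_B^i)] · a[j_A^i] · b[j_B^i]. Define Ũ = m/(∑_{i=1}^{m} min(hⁱ(j_A^i), hⁱ(j_B^i))) − 1 and the estimator F̄ = (Ũ/m) · ∑_{i=1}^{m}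 Z_i. Then with probability at least 2/3, |F̄ − ⟨a,b⟩| ≤ ε · c² · √(max(|A|,|B|) · |A∩B|). -/
open MeasureTheory Finset
open scoped ENNReal


/-- `m` mutually independent uniform hash families on `J`. -/
noncomputable def hashFamilies (m : ℕ) (J : Type*) [Fintype J] :
    Measure (Fin m → J → ℝ) :=
  Measure.pi fun _ : Fin m => uniformHash J


instance uniformHash_prob (J : Type*) [Fintype J] : IsProbabilityMeasure (uniformHash J) := by
  have : IsProbabilityMeasure ((volume : Measure ℝ).restrict (Set.Icc 0 1)) := ⟨by simp⟩
  unfold uniformHash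
  infer_instance

instance hashFamilies_prob (m : ℕ) (J : Type*) [Fintype J] :
    IsProbabilityMeasure (hashFamilies m J) := by
  unfold hashFamilies
  infer_instance

lemma uniformHash_eq (J : Type*) [Fintype J] : uniformHash J =
    (volume : Measure (J → ℝ)).restrict (Set.univ.pi fun _ => Set.Icc 0 1) := by
  unfold uniformHash
  rw [← Measure.restrict_pi_pi]
  rfl

lemma uniformHash_mem (J : Type*) [Fintype J] :
    ∀ᵐ h ∂(uniformHash J), ∀ j, h j ∈ Set.Icc (0 : ℝ) 1 := by
  rw [uniformHash_eq]
  filter_upwards [ae_restrict_mem (MeasurableSet.univ_pi fun _ => measurableSet_Icc)] with h hh j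
  exact hh j (Set.mem_univ j)

lemma uniformHash_inj (J : Type*) [Fintype J] :
    ∀ᵐ h ∂(uniformHash J), Function.Injective h := by
  classical
  have key : ∀ i j : J, i ≠ j → ∀ᵐ h ∂(uniformHash J), h i ≠ h j := by
    intro i j hij
    rw [uniformHash_eq]
    apply ae_restrict_of_ae
    let S : Submodule ℝ (J → ℝ) :=
      LinearMap.ker ((LinearMap.proj i : (J → ℝ) →ₗ[ℝ] ℝ) - (LinearMap.proj j : (J → ℝ) →ₗ[ℝ] ℝ))
    have hS : (volume : Measure (J → ℝ)) S = 0 := by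
      apply Measure.addHaar_submodule
      intro h
      have : Pi.single i (1 : ℝ) ∈ S := by rw [h]; trivial
      simp [S, hij.symm] at this
    rw [ae_iff]
    convert hS using 2
    ext h
    simp [S, sub_eq_zero]
  have : ∀ᵐ h ∂(uniformHash J), ∀ i j : J, i ≠ j → h i ≠ h j := by
    rw [ae_all_iff]; intro i
    rw [ae_all_iff]; intro j
    by_cases hij : i = j
    · simp [hij]
    · filter_upwards [key i j hij] with h hh _ using hh
  filter_upwards [this] with h hh i j hij
  by_contra hne
  exact hh i j hne hij

lemma measurable_inf_hash {J : Type*} [Fintype J] (U : Finset J) (hU : U.Nonempty) :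
    Measurable fun h : J → ℝ => U.inf' hU h := by
  exact (Continuous.finset_inf'_apply hU fun j _ => continuous_apply j).measurable

lemma inf_hash_mem {J : Type*} [Fintype J] (U : Finset J) (hU : U.Nonempty) :
    ∀ᵐ h ∂(uniformHash J), U.inf' hU h ∈ Set.Icc (0 : ℝ) 1 := by
  filter_upwards [uniformHash_mem J] with h hh
  constructor
  · rw [Finset.le_inf'_iff]; exact fun i _ => (hh i).1
  · exact (Finset.inf'_le _ hU.choose_spec).trans (hh _).2

lemma tail_inf {J : Type*} [Fintype J] (U : Finset J) (hU : U.Nonempty) (t : ℝ) (ht : 0 < t) :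
    uniformHash J {h | t < U.inf' hU h} = ENNReal.ofReal (1 - t) ^ U.card := by
  classical
  have : {h : J → ℝ | t < U.inf' hU h} =
      Set.univ.pi fun j => if j ∈ U then Set.Ioi t else Set.univ := by
    ext h
    simp only [Set.mem_ofPred_eq, Finset.lt_inf'_iff, Set.mem_pi, Set.mem_univ, true_imp_iff]
    refine forall_congr' fun j => ?_
    by_cases hj : j ∈ U <;> simp [hj]
  rw [this, uniformHash, Measure.pi_pi]
  have h1 : ∀ j : J, ((volume : Measure ℝ).restrict (Set.Icc 0 1))
      (if j ∈ U then Set.Ioi t else Set.univ) =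
      if j ∈ U then ENNReal.ofReal (1 - t) else 1 := by
    intro j
    split_ifs
    · rw [Measure.restrict_apply measurableSet_Ioi]
      have : Set.Ioi t ∩ Set.Icc 0 1 = Set.Ioc t 1 := by
        ext x; simp only [Set.mem_inter_iff, Set.mem_Ioi, Set.mem_Icc, Set.mem_Ioc]
        constructor
        · rintro ⟨a, b, c⟩; exact ⟨a, c⟩
        · rintro ⟨a, c⟩; exact ⟨a, by linarith, c⟩
      rw [this, Real.volume_Ioc]
    · simp
  simp_rw [h1]
  rw [Finset.prod_ite_mem]
  simp

lemma moment_inf {J : Type*} [Fintype J] (U : Finset J) (hU : U.Nonempty) (p : ℕ) :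
    ∫ h, (U.inf' hU h) ^ (p + 1) ∂(uniformHash J) =
      ∫ t in (0 : ℝ)..1, (1 - t) ^ U.card * ((p + 1) * t ^ p) := by
  have hW := inf_hash_mem U hU
  have hmeas := measurable_inf_hash U hU
  have lc := lintegral_comp_eq_lintegral_meas_lt_mul (uniformHash J)
    (f := fun h => U.inf' hU h) (g := fun t => ((p : ℝ) + 1) * t ^ p)
    (by filter_upwards [hW] with h hh using hh.1) hmeas.aemeasurable
    (fun t _ => Continuous.intervalIntegrable (by fun_prop) _ _)
    (by filter_upwards [ae_restrict_mem measurableSet_Ioi] with t ht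
        have : (0 : ℝ) < t := ht
        positivity)
  have hint : ∀ x : ℝ, ∫ t in (0 : ℝ)..x, ((p : ℝ) + 1) * t ^ p = x ^ (p + 1) := by
    intro x
    rw [intervalIntegral.integral_const_mul, integral_pow]
    have : (p : ℝ) + 1 ≠ 0 := by positivity
    field_simp
    simp
  simp only [hint] at lc
  rw [integral_eq_lintegral_of_nonneg_ae, lc, intervalIntegral.integral_of_le zero_le_one,
    integral_eq_lintegral_of_nonneg_ae]
  · congr 1
    rw [← Set.Ioc_union_Ioi_eq_Ioi (zero_le_one (α := ℝ)),
      lintegral_union measurableSet_Ioi (Set.Ioc_disjoint_Ioi le_rfl)]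
    have h2 : ∫⁻ t in Set.Ioi (1 : ℝ), (uniformHash J) {a | t < U.inf' hU a} *
        ENNReal.ofReal (((p : ℝ) + 1) * t ^ p) = 0 := by
      rw [setLIntegral_congr_fun (g := fun _ => 0) measurableSet_Ioi]
      · simp
      · intro t ht
        have ht : (1 : ℝ) < t := ht
        simp only
        rw [tail_inf U hU t (by linarith), ENNReal.ofReal_of_nonpos (by linarith),
          zero_pow hU.card_pos.ne', zero_mul]
    rw [h2, add_zero]
    apply setLIntegral_congr_fun measurableSet_Ioc
    intro t ht
    have h1 : 0 ≤ 1 - t := by linarith [ht.2]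
    simp only
    rw [tail_inf U hU t ht.1, ENNReal.ofReal_mul (pow_nonneg h1 _), ENNReal.ofReal_pow h1]
  · filter_upwards [ae_restrict_mem measurableSet_Ioc] with t ht
    have h1 : 0 ≤ 1 - t := by linarith [ht.2]
    have h2 : 0 ≤ t := ht.1.le
    simp only [Pi.zero_apply]
    positivity
  · exact Continuous.aestronglyMeasurable (by fun_prop)
  · filter_upwards [hW] with h hh
    exact pow_nonneg hh.1 _
  · exact (hmeas.pow_const _).aestronglyMeasurable

lemma mean_inf {J : Type*} [Fintype J] (U : Finset J) (hU : U.Nonempty) :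
    ∫ h, U.inf' hU h ∂(uniformHash J) = 1 / ((U.card : ℝ) + 1) := by
  have := moment_inf U hU 0
  simp only [zero_add, pow_one, Nat.cast_zero, pow_zero, mul_one] at this
  rw [this, intervalIntegral.integral_comp_sub_left (fun t => t ^ U.card) 1, integral_pow]
  simp

lemma sq_inf {J : Type*} [Fintype J] (U : Finset J) (hU : U.Nonempty) :
    ∫ h, (U.inf' hU h) ^ 2 ∂(uniformHash J) =
      2 / (((U.card : ℝ) + 1) * ((U.card : ℝ) + 2)) := by
  have := moment_inf U hU 1
  norm_num at this
  rw [this]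
  have e := intervalIntegral.integral_comp_sub_left (a := 0) (b := 1)
    (fun t : ℝ => t ^ U.card * (2 * (1 - t))) 1
  simp only [sub_sub_cancel, sub_self, sub_zero] at e
  rw [e]
  have e2 : (fun t : ℝ => t ^ U.card * (2 * (1 - t))) =
      fun t => 2 * t ^ U.card - 2 * t ^ (U.card + 1) := by
    ext t; ring
  rw [e2, intervalIntegral.integral_sub
    (Continuous.intervalIntegrable (by fun_prop) _ _)
    (Continuous.intervalIntegrable (by fun_prop) _ _),
    intervalIntegral.integral_const_mul, intervalIntegral.integral_const_mul,
    integral_pow, integral_pow]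
  have h1 : (U.card : ℝ) + 1 ≠ 0 := by positivity
  have h2 : (U.card : ℝ) + 2 ≠ 0 := by positivity
  have h3 : (U.card : ℝ) + 1 + 1 ≠ 0 := by positivity
  push_cast
  simp only [one_pow]
  rw [zero_pow (by omega), zero_pow (by omega)]
  field_simp
  ring

lemma memLp_inf {J : Type*} [Fintype J] (U : Finset J) (hU : U.Nonempty) :
    MemLp (fun h => U.inf' hU h) 2 (uniformHash J) := by
  apply MemLp.of_bound (measurable_inf_hash U hU).aestronglyMeasurable 1
  filter_upwards [inf_hash_mem U hU] with h hh
  rw [Real.norm_eq_abs, abs_le]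
  exact ⟨by linarith [hh.1], hh.2⟩

lemma var_inf {J : Type*} [Fintype J] (U : Finset J) (hU : U.Nonempty) :
    ProbabilityTheory.variance (fun h => U.inf' hU h) (uniformHash J)
      ≤ 1 / ((U.card : ℝ) + 1) ^ 2 := by
  rw [ProbabilityTheory.variance_eq_sub (memLp_inf U hU)]
  simp only [Pi.pow_apply]
  rw [sq_inf, mean_inf]
  have h1 : (0 : ℝ) < (U.card : ℝ) + 1 := by positivity
  have h2 : (0 : ℝ) < (U.card : ℝ) + 2 := by positivity
  rw [sub_le_iff_le_add, div_pow, one_pow, ← add_div, div_le_div_iff₀ (by positivity) (by positivity)]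
  nlinarith [mul_pos h1 h1]

lemma cheb {Ω : Type*} [MeasurableSpace Ω] (μ : Measure Ω) [IsProbabilityMeasure μ]
    (X : Ω → ℝ) (hX : MemLp X 2 μ) (e v t : ℝ) (he : ∫ ω, X ω ∂μ = e)
    (hv : ProbabilityTheory.variance X μ ≤ v) (m : ℕ) (ht : 0 < t) (hm : 6 * (m * v) ≤ t ^ 2) :
    (Measure.pi fun _ : Fin m => μ) {ω | t ≤ |(∑ i, X (ω i)) - m * e|} ≤ ENNReal.ofReal (1 / 6) := by
  have hmem : ∀ i : Fin m, MemLp (fun ω : Fin m → Ω => X (ω i)) 2 (Measure.pi fun _ : Fin m => μ) :=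
    fun i => hX.comp_measurePreserving (measurePreserving_eval _ i)
  have hmemS : MemLp (∑ i, fun ω : Fin m → Ω => X (ω i)) 2 (Measure.pi fun _ : Fin m => μ) :=
    memLp_finsetSum' _ fun i _ => hmem i
  have hvar := ProbabilityTheory.variance_sum_pi (μ := fun _ : Fin m => μ) (X := fun _ => X)
    (fun _ => hX)
  have hmean : ∫ ω, (∑ i, fun ω : Fin m → Ω => X (ω i)) ω ∂(Measure.pi fun _ : Fin m => μ)
      = m * e := by
    simp only [Finset.sum_apply]
    rw [integral_finsetSum _ fun i _ => (hmem i).integrable (by norm_num)]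
    have : ∀ i : Fin m, ∫ ω : Fin m → Ω, X (ω i) ∂(Measure.pi fun _ : Fin m => μ) = e := by
      intro i
      rw [← he]
      exact integral_comp_eval (μ := fun _ : Fin m => μ) hX.1
    simp [this]
  have := ProbabilityTheory.meas_ge_le_variance_div_sq hmemS ht
  rw [hmean, hvar] at this
  simp only [Finset.sum_apply] at this
  refine this.trans (ENNReal.ofReal_le_ofReal ?_)
  simp only [Finset.sum_const, Finset.card_univ, Fintype.card_fin, nsmul_eq_mul]
  rw [div_le_div_iff₀ (by positivity) (by norm_num)]
  have : (m : ℝ) * ProbabilityTheory.variance X μ ≤ m * v := by gcongr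
  linarith

/-- the event that `k` minimizes the hash over `U` -/
def minSet {J : Type*} (U : Finset J) (k : J) : Set (J → ℝ) := {h | ∀ j ∈ U, h k ≤ h j}

lemma measurableSet_minSet {J : Type*} [Fintype J] (U : Finset J) (k : J) :
    MeasurableSet (minSet U k) := by
  have : minSet U k = ⋂ j ∈ U, {h : J → ℝ | h k ≤ h j} := by
    ext h; simp [minSet]
  rw [this]
  exact Finset.measurableSet_biInter _ fun j _ =>
    measurableSet_le (measurable_pi_apply k) (measurable_pi_apply j)

lemma minSet_symm {J : Type*} [Fintype J] (U : Finset J) (k k' : J) (hk : k ∈ U) (hk' : k' ∈ U) :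
    uniformHash J (minSet U k) = uniformHash J (minSet U k') := by
  classical
  have mp := measurePreserving_piCongrLeft
    (μ := fun _ : J => (volume : Measure ℝ).restrict (Set.Icc 0 1)) (Equiv.swap k k')
  have := mp.measure_preimage (measurableSet_minSet U k').nullMeasurableSet
  unfold uniformHash
  rw [← this]
  congr 1
  ext h
  have e : ∀ j, (MeasurableEquiv.piCongrLeft (fun _ : J => ℝ) (Equiv.swap k k')) h j =
      h (Equiv.swap k k' j) := by
    intro j
    have := Equiv.piCongrLeft_apply_apply (P := fun _ : J => ℝ) (Equiv.swap k k') h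
      (Equiv.swap k k' j)
    rw [Equiv.swap_apply_self] at this
    exact this
  have eU : ∀ j ∈ U, Equiv.swap k k' j ∈ U := by
    intro j hj
    rcases Equiv.swap_apply_eq_iff (x := k) (y := k') (z := j) |>.1 rfl with _
    by_cases h1 : j = k
    · simp [h1, hk']
    by_cases h2 : j = k'
    · simp [h2, hk]
    rwa [Equiv.swap_apply_of_ne_of_ne h1 h2]
  simp only [minSet, Set.mem_preimage, Set.mem_ofPred_eq, e, Equiv.swap_apply_right]
  constructor
  · intro hh j hj
    exact hh _ (eU j hj)
  · intro hh j hj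
    have := hh _ (eU j hj)
    rwa [Equiv.swap_apply_self] at this

open Classical in
lemma sum_ind_s6 {J : Type*} (U I : Finset J) (hIU : I ⊆ U) (h : J → ℝ)
    (hh : Function.Injective h) (f : J → ℝ) (k : J) (hkU : k ∈ U) (hk : ∀ j ∈ U, h k ≤ h j) :
    ∑ j ∈ I, (minSet U j).indicator (fun _ => f j) h = if k ∈ I then f k else 0 := by
  have : ∀ j ∈ I, (minSet U j).indicator (fun _ => f j) h = if k = j then f j else 0 := by
    intro j hj
    rw [Set.indicator_apply]
    congr 1
    apply propext
    constructor
    · intro hm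
      exact hh (le_antisymm (hk j (hIU hj)) (hm k hkU))
    · rintro rfl
      exact hk
  rw [Finset.sum_congr rfl this, Finset.sum_ite_eq]

lemma prob_minSet {J : Type*} [Fintype J] (U : Finset J) (k : J) (hk : k ∈ U) :
    (uniformHash J).real (minSet U k) = 1 / (U.card : ℝ) := by
  classical
  have h1 : ∫ h, ∑ j ∈ U, (minSet U j).indicator (fun _ => (1 : ℝ)) h ∂(uniformHash J) = 1 := by
    have : (fun h => ∑ j ∈ U, (minSet U j).indicator (fun _ => (1 : ℝ)) h) =ᵐ[uniformHash J]
        fun _ => 1 := by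
      filter_upwards [uniformHash_inj J] with h hh
      obtain ⟨i, hi, him⟩ := U.exists_min_image h ⟨k, hk⟩
      have := sum_ind_s6 U U subset_rfl h hh (fun _ => 1) i hi him
      rw [this, if_pos hi]
    rw [integral_congr_ae this]
    simp
  rw [integral_finsetSum _ fun j _ =>
    (integrable_const (1 : ℝ)).indicator (measurableSet_minSet U j)] at h1
  have h2 : ∀ j ∈ U, ∫ h, (minSet U j).indicator (fun _ => (1 : ℝ)) h ∂(uniformHash J) =
      (uniformHash J).real (minSet U k) := by
    intro j hj
    rw [integral_indicator_const _ (measurableSet_minSet U j)]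
    simp [Measure.real, minSet_symm U j k hj hk]
  rw [Finset.sum_congr rfl h2] at h1
  simp only [Finset.sum_const, nsmul_eq_mul] at h1
  have : (U.card : ℝ) ≠ 0 := by
    have := Finset.card_pos.2 ⟨k, hk⟩
    positivity
  field_simp
  linarith

/-- measurable version of `Z` -/
noncomputable def Zm {J : Type*} (U I : Finset J) (f : J → ℝ) (h : J → ℝ) : ℝ :=
  ∑ j ∈ I, (minSet U j).indicator (fun _ => f j) h

lemma measurable_Zm {J : Type*} [Fintype J] (U I : Finset J) (f : J → ℝ) :
    Measurable (Zm U I f) := by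
  unfold Zm
  exact Finset.measurable_fun_sum _ fun j _ =>
    measurable_const.indicator (measurableSet_minSet U j)

lemma mean_Zm {J : Type*} [Fintype J] (U I : Finset J) (hIU : I ⊆ U) (f : J → ℝ) :
    ∫ h, Zm U I f h ∂(uniformHash J) = (∑ j ∈ I, f j) / U.card := by
  unfold Zm
  rw [integral_finsetSum _ fun j _ =>
    (integrable_const (f j)).indicator (measurableSet_minSet U j), Finset.sum_div]
  refine Finset.sum_congr rfl fun j hj => ?_
  rw [integral_indicator_const _ (measurableSet_minSet U j), prob_minSet U j (hIU hj), smul_eq_mul]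
  ring

lemma sq_Zm {J : Type*} [Fintype J] (U I : Finset J) (hU : U.Nonempty) (hIU : I ⊆ U) (f : J → ℝ) :
    (fun h => Zm U I f h ^ 2) =ᵐ[uniformHash J] Zm U I (fun j => f j ^ 2) := by
  classical
  filter_upwards [uniformHash_inj J] with h hh
  obtain ⟨i, hi, him⟩ := U.exists_min_image h hU
  unfold Zm
  rw [sum_ind_s6 U I hIU h hh f i hi him, sum_ind_s6 U I hIU h hh _ i hi him]
  split_ifs <;> simp

lemma memLp_Zm {J : Type*} [Fintype J] (U I : Finset J) (f : J → ℝ) :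
    MemLp (Zm U I f) 2 (uniformHash J) := by
  unfold Zm
  exact memLp_finsetSum _ fun j _ => (memLp_const (f j)).indicator (measurableSet_minSet U j)

lemma var_Zm {J : Type*} [Fintype J] (U I : Finset J) (hU : U.Nonempty) (hIU : I ⊆ U) (f : J → ℝ)
    (K : ℝ) (hf : ∀ j, f j ^ 2 ≤ K) :
    ProbabilityTheory.variance (Zm U I f) (uniformHash J) ≤ I.card * K / U.card := by
  refine (ProbabilityTheory.variance_le_expectation_sq
    (measurable_Zm U I f).aestronglyMeasurable).trans ?_
  have : ∫ h, (Zm U I f ^ 2) h ∂(uniformHash J) = ∫ h, Zm U I (fun j => f j ^ 2) h ∂(uniformHash J) :=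
    integral_congr_ae (sq_Zm U I hU hIU f)
  rw [this, mean_Zm U I hIU]
  gcongr
  have := Finset.sum_le_card_nsmul I (fun j => f j ^ 2) K fun j _ => hf j
  simpa using this

lemma argminOn_mem {α : Type*} (s : Finset α) (hs : s.Nonempty) (f : α → ℝ) :
    argminOn s hs f ∈ s := (s.exists_min_image f hs).choose_spec.1

lemma argminOn_le {α : Type*} (s : Finset α) (hs : s.Nonempty) (f : α → ℝ) :
    ∀ j ∈ s, f (argminOn s hs f) ≤ f j := (s.exists_min_image f hs).choose_spec.2

lemma min_argmin {n : ℕ} (A B : Finset (Fin n)) (hA : A.Nonempty) (hB : B.Nonempty)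
    (hU : (A ∪ B).Nonempty) (h : Fin n → ℝ) :
    min (h (argminOn A hA h)) (h (argminOn B hB h)) = (A ∪ B).inf' hU h := by
  apply le_antisymm
  · rw [Finset.le_inf'_iff]
    intro j hj
    rcases Finset.mem_union.1 hj with hj | hj
    · exact (min_le_left _ _).trans (argminOn_le A hA h j hj)
    · exact (min_le_right _ _).trans (argminOn_le B hB h j hj)
  · apply le_min
    · exact Finset.inf'_le _ (Finset.mem_union_left _ (argminOn_mem A hA h))
    · exact Finset.inf'_le _ (Finset.mem_union_right _ (argminOn_mem B hB h))

lemma Zuw_eq_s6 {n : ℕ} (a b : Fin n → ℝ) (A B : Finset (Fin n)) (hA : A.Nonempty) (hB : B.Nonempty)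
    (h : Fin n → ℝ) (hh : Function.Injective h) :
    Zuw a b A B hA hB h = Zm (A ∪ B) (A ∩ B) (fun j => a j * b j) h := by
  classical
  obtain ⟨i, hi, him⟩ := (A ∪ B).exists_min_image h (hA.mono Finset.subset_union_left)
  unfold Zm Zuw
  rw [sum_ind_s6 (A ∪ B) (A ∩ B) (fun x hx => Finset.mem_union_left _ (Finset.mem_inter.1 hx).1)
    h hh _ i hi him]
  have mA := argminOn_mem A hA h
  have mB := argminOn_mem B hB h
  have lA := argminOn_le A hA h
  have lB := argminOn_le B hB h
  by_cases hI : i ∈ A ∩ B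
  · rw [if_pos hI]
    obtain ⟨iA, iB⟩ := Finset.mem_inter.1 hI
    have eA : argminOn A hA h = i :=
      hh (le_antisymm (lA i iA) (him _ (Finset.mem_union_left _ mA)))
    have eB : argminOn B hB h = i :=
      hh (le_antisymm (lB i iB) (him _ (Finset.mem_union_right _ mB)))
    simp [eA, eB]
  · rw [if_neg hI]
    have : h (argminOn A hA h) ≠ h (argminOn B hB h) := by
      intro he
      have he' := hh he
      apply hI
      rcases Finset.mem_union.1 hi with iA | iB
      · have eA : argminOn A hA h = i :=
          hh (le_antisymm (lA i iA) (him _ (Finset.mem_union_left _ mA)))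
        rw [← eA]
        exact Finset.mem_inter.2 ⟨mA, he' ▸ mB⟩
      · have eB : argminOn B hB h = i :=
          hh (le_antisymm (lB i iB) (him _ (Finset.mem_union_right _ mB)))
        rw [← eB]
        exact Finset.mem_inter.2 ⟨he' ▸ mA, mB⟩
    simp [this]

/-- the deterministic part -/
lemma det_bound (N k M m S T μ c ε : ℝ) (hN : 1 ≤ N) (hk0 : 0 ≤ k) (hkN : k ≤ N) (hNM : N ≤ 2 * M)
    (hm : 0 < m) (hc : 0 < c) (hε : 0 < ε) (hε1 : ε < 1) (hμ : |μ| ≤ c ^ 2 * k)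
    (hS : |S - m * (1 / (N + 1))| ≤ ε / 10 * (m / (N + 1)))
    (hT : |T - m * (μ / N)| ≤ ε / 10 * (m * (c ^ 2 * Real.sqrt (k / N)))) :
    |(m / S - 1) / m * T - μ| ≤ ε * c ^ 2 * Real.sqrt (M * k) := by
  have hN0 : 0 < N := by linarith
  set q := Real.sqrt (N * k) with hq
  have hq0 : 0 ≤ q := Real.sqrt_nonneg _
  have hqk : k ≤ q := by
    apply Real.le_sqrt_of_sq_le
    nlinarith
  have hqs : N * Real.sqrt (k / N) = q := by
    rw [hq, show N * k = N ^ 2 * (k / N) by field_simp, Real.sqrt_mul (by positivity),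
      Real.sqrt_sq hN0.le]
  have hqM : 7 * q ≤ 10 * Real.sqrt (M * k) := by
    have : q ≤ Real.sqrt 2 * Real.sqrt (M * k) := by
      rw [← Real.sqrt_mul (by norm_num)]
      apply Real.sqrt_le_sqrt
      nlinarith
    have h2 : Real.sqrt 2 ≤ 10 / 7 := by
      rw [Real.sqrt_le_left (by norm_num)]
      norm_num
    have := mul_le_mul_of_nonneg_right h2 (Real.sqrt_nonneg (M * k))
    linarith
  -- normalise
  obtain ⟨s, hs⟩ : ∃ s, S = m / (N + 1) * s := ⟨S / (m / (N + 1)), by field_simp⟩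
  have hs1 : |s - 1| ≤ ε / 10 := by
    have e : S - m * (1 / (N + 1)) = m / (N + 1) * (s - 1) := by rw [hs]; ring
    have hp : 0 < m / (N + 1) := by positivity
    rw [e, abs_mul, abs_of_pos hp, mul_comm] at hS
    exact le_of_mul_le_mul_right hS hp
  obtain ⟨z, hz⟩ : ∃ z, T = m * z := ⟨T / m, by field_simp⟩
  have hz1 : |z - μ / N| ≤ ε / 10 * (c ^ 2 * Real.sqrt (k / N)) := by
    have e : T - m * (μ / N) = m * (z - μ / N) := by rw [hz]; ring
    rw [e, abs_mul, abs_of_pos hm,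
      show ε / 10 * (m * (c ^ 2 * Real.sqrt (k / N))) = m * (ε / 10 * (c ^ 2 * Real.sqrt (k / N))) by
        ring] at hT
    exact le_of_mul_le_mul_left hT hm
  obtain ⟨hsl, hsu⟩ := abs_le.1 hs1
  have hs0 : 9 / 10 ≤ s := by linarith
  have hspos : 0 < s := by linarith
  set V := (N + 1) / s - 1 with hV
  have e1 : (m / S - 1) / m * T = V * z := by
    rw [hz, hs, hV]; field_simp
  have hVN : |V - N| ≤ 4 * (ε / 10) * N := by
    have e : V - N = (N + 1) * ((1 - s) / s) := by rw [hV]; field_simp; ring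
    have hb : |(1 - s) / s| ≤ 2 * (ε / 10) := by
      rw [abs_div, abs_of_pos hspos, abs_sub_comm, div_le_iff₀ hspos]
      nlinarith
    rw [e, abs_mul, abs_of_pos (by linarith : 0 < N + 1)]
    calc (N + 1) * |(1 - s) / s| ≤ (N + N) * (2 * (ε / 10)) := by gcongr
      _ = _ := by ring
  have hVabs : |V| ≤ 3 * N := by
    have : |V| ≤ |V - N| + |N| := by
      calc |V| = |(V - N) + N| := by ring_nf
        _ ≤ _ := abs_add_le _ _
    rw [abs_of_pos hN0] at this
    nlinarith
  have e2 : V * z - μ = V * (z - μ / N) + (V - N) * (μ / N) := by field_simp; ring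
  rw [e1, e2]
  calc |V * (z - μ / N) + (V - N) * (μ / N)| ≤ |V| * |z - μ / N| + |V - N| * (|μ| / N) := by
        refine (abs_add_le _ _).trans ?_
        rw [abs_mul, abs_mul, abs_div, abs_of_pos hN0]
    _ ≤ (3 * N) * (ε / 10 * (c ^ 2 * Real.sqrt (k / N))) + (4 * (ε / 10) * N) * (c ^ 2 * k / N) := by
        gcongr
    _ = ε / 10 * c ^ 2 * (3 * (N * Real.sqrt (k / N)) + 4 * k) := by field_simp
    _ ≤ ε / 10 * c ^ 2 * (3 * q + 4 * q) := by rw [hqs]; gcongr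
    _ ≤ ε / 10 * c ^ 2 * (10 * Real.sqrt (M * k)) := by
        gcongr; linarith
    _ = _ := by ring

/-- There is an absolute constant `C > 0` such that for vectors `a, b ∈ ℝⁿ` with nonempty
supports `A`, `B` and entries bounded by `c > 0`, `ε ∈ (0,1)`, an integer `m ≥ C/ε²`, and
mutually independent uniform hash families `h¹,...,hᵐ`, the unweighted MinHash estimator
`F̄ = (Ũ/m) ∑ᵢ Zᵢ` with `Ũ = m / (∑ᵢ min(hⁱ(j_Aⁱ), hⁱ(j_Bⁱ))) - 1` satisfies
`|F̄ - ⟨a,b⟩| ≤ ε c² √(max(|A|,|B|) |A ∩ B|)` with probability at least `2/3`. -/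
theorem minhash_estimator :
    ∃ C : ℝ, 0 < C ∧
      ∀ (n : ℕ) (a b : Fin n → ℝ) (c : ℝ), 0 < c →
      (∀ i, |a i| ≤ c) → (∀ i, |b i| ≤ c) →
      ∀ (hA : (supp a).Nonempty) (hB : (supp b).Nonempty),
      ∀ ε : ℝ, ε ∈ Set.Ioo (0 : ℝ) 1 →
      ∀ m : ℕ, C / ε ^ 2 ≤ (m : ℝ) →
        (2 : ℝ≥0∞) / 3 ≤
          hashFamilies m (Fin n)
            {H : Fin m → Fin n → ℝ |
              |(((m : ℝ) / (∑ i, min (H i (argminOn (supp a) hA (H i)))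
                      (H i (argminOn (supp b) hB (H i)))) - 1) / m) *
                  (∑ i, Zuw a b (supp a) (supp b) hA hB (H i)) - ∑ k, a k * b k|
                ≤ ε * c ^ 2 *
                    Real.sqrt (max ((supp a).card : ℝ) ((supp b).card : ℝ) *
                      ((supp a ∩ supp b).card : ℝ))} := by
  refine ⟨600, by norm_num, ?_⟩
  intro n a b c hc ha hb hA hB ε hε m hm
  obtain ⟨hε0, hε1⟩ := hε
  set A := supp a with hAdef
  set B := supp b with hBdef
  have hU : (A ∪ B).Nonempty := hA.mono Finset.subset_union_left
  have hIU : A ∩ B ⊆ A ∪ B := fun x hx => Finset.mem_union_left _ (Finset.mem_inter.1 hx).1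
  set U := A ∪ B with hUdef
  set I := A ∩ B with hIdef
  set f : Fin n → ℝ := fun j => a j * b j with hf
  have hfabs : ∀ j, |f j| ≤ c ^ 2 := by
    intro j
    rw [hf]
    simp only [abs_mul]
    calc |a j| * |b j| ≤ c * c := mul_le_mul (ha j) (hb j) (abs_nonneg _) hc.le
      _ = c ^ 2 := by ring
  have hfsq : ∀ j, f j ^ 2 ≤ c ^ 4 := by
    intro j
    calc f j ^ 2 = |f j| ^ 2 := (sq_abs _).symm
      _ ≤ (c ^ 2) ^ 2 := by gcongr; exact hfabs j
      _ = c ^ 4 := by ring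
  have hsum : ∑ k, a k * b k = ∑ k ∈ I, f k := by
    symm
    apply Finset.sum_subset (Finset.subset_univ _)
    intro x _ hx
    by_contra hne
    apply hx
    have h1 : a x ≠ 0 := left_ne_zero_of_mul hne
    have h2 : b x ≠ 0 := right_ne_zero_of_mul hne
    simp [hIdef, hAdef, hBdef, supp, h1, h2]
  have hm0 : (0 : ℝ) < m := lt_of_lt_of_le (by positivity) hm
  have hm6 : 600 ≤ m * ε ^ 2 := by rwa [div_le_iff₀ (by positivity)] at hm
  have hN1 : (1 : ℝ) ≤ U.card := by exact_mod_cast hU.card_pos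
  have hN0 : (0 : ℝ) < U.card := by linarith
  have hμ : |∑ k ∈ I, f k| ≤ c ^ 2 * I.card := by
    refine (Finset.abs_sum_le_sum_abs _ _).trans ?_
    have := Finset.sum_le_card_nsmul I (fun j => |f j|) (c ^ 2) fun j _ => hfabs j
    rw [nsmul_eq_mul, mul_comm] at this
    exact this
  have hkN : (I.card : ℝ) ≤ U.card := by exact_mod_cast Finset.card_le_card hIU
  have hNM : (U.card : ℝ) ≤ 2 * max (A.card : ℝ) (B.card : ℝ) := by
    have h1 : (U.card : ℝ) ≤ A.card + B.card := by exact_mod_cast Finset.card_union_le A B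
    linarith [le_max_left (A.card : ℝ) (B.card : ℝ), le_max_right (A.card : ℝ) (B.card : ℝ)]
  -- bad events
  set P := hashFamilies m (Fin n) with hP
  set tS : ℝ := ε / 10 * (m / (U.card + 1)) with htS
  set tT : ℝ := ε / 10 * (m * (c ^ 2 * Real.sqrt (I.card / U.card))) with htT
  set E1 : Set (Fin m → Fin n → ℝ) :=
    {H | tS ≤ |(∑ i, U.inf' hU (H i)) - m * (1 / (U.card + 1))|} with hE1
  set E2 : Set (Fin m → Fin n → ℝ) :=
    {H | tT < |(∑ i, Zm U I f (H i)) - m * ((∑ k ∈ I, f k) / U.card)|} with hE2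
  have p1 : P E1 ≤ ENNReal.ofReal (1 / 6) := by
    refine cheb (uniformHash (Fin n)) (fun h => U.inf' hU h) (memLp_inf U hU) _ _ tS
      (mean_inf U hU) (var_inf U hU) m (by positivity) ?_
    have e : tS ^ 2 - 6 * (m * (1 / ((U.card : ℝ) + 1) ^ 2)) =
        m / ((U.card : ℝ) + 1) ^ 2 * ((m * ε ^ 2 - 600) / 100) := by
      rw [htS]; field_simp; ring
    have : 0 ≤ m / ((U.card : ℝ) + 1) ^ 2 * ((m * ε ^ 2 - 600) / 100) := by
      apply mul_nonneg (by positivity); linarith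
    linarith
  have p2 : P E2 ≤ ENNReal.ofReal (1 / 6) := by
    rcases Finset.eq_empty_or_nonempty I with hI | hI
    · have : E2 = ∅ := by
        ext H
        simp [hE2, htT, hI, Zm]
      rw [this]; simp
    · have hk0 : (0 : ℝ) < I.card := by exact_mod_cast hI.card_pos
      have hsub : E2 ⊆ {H | tT ≤ |(∑ i, Zm U I f (H i)) - m * ((∑ k ∈ I, f k) / U.card)|} :=
        by
          intro H hH
          simp only [hE2, Set.mem_ofPred_eq] at hH ⊢
          exact hH.le
      refine (measure_mono hsub).trans ?_
      refine cheb (uniformHash (Fin n)) (Zm U I f) (memLp_Zm U I f) _ _ tT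
        (mean_Zm U I hIU f) (var_Zm U I hU hIU f _ hfsq) m (by positivity) ?_
      have e : tT ^ 2 = m * (I.card * c ^ 4 / U.card) * (m * ε ^ 2 / 100) := by
        rw [htT, mul_pow, mul_pow, mul_pow, Real.sq_sqrt (by positivity)]
        field_simp
        norm_num
      rw [e]
      have : 0 ≤ m * (I.card * c ^ 4 / (U.card : ℝ)) := by positivity
      nlinarith
  have hinj : ∀ᵐ H ∂P, ∀ i, Function.Injective (H i) := by
    rw [ae_all_iff]
    intro i
    exact (measurePreserving_eval (fun _ : Fin m => uniformHash (Fin n)) i).quasiMeasurePreserving.ae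
      (uniformHash_inj (Fin n))
  set G : Set (Fin m → Fin n → ℝ) := _ with hG
  change (2 : ℝ≥0∞) / 3 ≤ P G
  have hsubset : ∀ᵐ H ∂P, H ∉ G → H ∈ E1 ∪ E2 := by
    filter_upwards [hinj] with H hH hHG
    by_contra hno
    apply hHG
    rw [Set.mem_union, not_or] at hno
    obtain ⟨h1, h2⟩ := hno
    have h1 : |(∑ i, U.inf' hU (H i)) - m * (1 / (U.card + 1))| ≤ tS := (not_le.1 h1).le
    have h2 : |(∑ i, Zm U I f (H i)) - m * ((∑ k ∈ I, f k) / U.card)| ≤ tT := not_lt.1 h2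
    have := det_bound U.card I.card (max A.card B.card) m _ _ _ c ε hN1 (by positivity) hkN hNM
      hm0 hc hε0 hε1 hμ h1 h2
    rw [hG, Set.mem_ofPred_eq, hsum]
    have r1 : ∑ i, U.inf' hU (H i) =
        ∑ i, min (H i (argminOn A hA (H i))) (H i (argminOn B hB (H i))) :=
      Finset.sum_congr rfl fun i _ => (min_argmin A B hA hB hU (H i)).symm
    have r2 : ∑ i, Zm U I f (H i) = ∑ i, Zuw a b A B hA hB (H i) :=
      Finset.sum_congr rfl fun i _ => (Zuw_eq_s6 a b A B hA hB _ (hH i)).symm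
    rw [r1, r2] at this
    exact this
  have hcompl : P Gᶜ ≤ ENNReal.ofReal (1 / 3) := by
    calc P Gᶜ ≤ P (E1 ∪ E2) := measure_mono_ae hsubset
      _ ≤ P E1 + P E2 := measure_union_le _ _
      _ ≤ ENNReal.ofReal (1 / 6) + ENNReal.ofReal (1 / 6) := add_le_add p1 p2
      _ = ENNReal.ofReal (1 / 3) := by
        rw [← ENNReal.ofReal_add (by norm_num) (by norm_num)]; norm_num
  have htot : 1 ≤ P G + P Gᶜ := by
    have := measure_union_le (μ := P) G Gᶜ
    rwa [Set.union_compl_self, measure_univ] at this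
  have h3 : (2 : ℝ≥0∞) / 3 + ENNReal.ofReal (1 / 3) = 1 := by
    rw [show (2 : ℝ≥0∞) / 3 = ENNReal.ofReal (2 / 3) by
      rw [ENNReal.ofReal_div_of_pos (by norm_num)]; norm_num,
      ← ENNReal.ofReal_add (by norm_num) (by norm_num)]
    norm_num
  have h4 : (2 : ℝ≥0∞) / 3 + ENNReal.ofReal (1 / 3) ≤ P G + ENNReal.ofReal (1 / 3) := by
    rw [h3]
    exact htot.trans (add_le_add le_rfl hcompl)
  exact (ENNReal.add_le_add_iff_right ENNReal.ofReal_ne_top).1 h4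
end
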